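/- Let ℓ₁,…,ℓ_k be positive integers and let (U_{ij}) for 1 ≤ i ≤ m, 1 ≤ j ≤ k be subspaces of a vector space U over a field F satisfying: (i) dim U_{ij} ≤ ℓ_j for all i, j; (ii) for each fixed i, the subspaces U_{i1},…,U_{ik} are pairwise disjoint (any two intersect only in {0}); and (iii) for each i < i′ there exist j < j′ with U_{ij} ∩ U_{i′j′} ≠ {0}. Then m ≤ (∏_{1 ≤ a < b ≤ k} (ℓ_a + ℓ_b)!) / (∏_{r=1}^k ℓ_r!)^{k-1}. -/

import Mathlib

/-!
For each pair of columns `a < b` a scalar `D_{ab}(i, i')` is attached to the rows `i, i'`: it vanishes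
when `U i a` meets `U i' b` nontrivially and it is nonzero when `i = i'`. As a matrix in `(i, i')`,
`D_{ab}` has rank at most `(ℓ_a + ℓ_b).choose ℓ_a`. By the hypotheses the entrywise product of the
`D_{ab}` over all pairs is triangular with nonzero diagonal, hence has rank `m`. The rank of an
entrywise product is at most the product of the ranks, so `m ≤ ∏_{a<b} (ℓ_a + ℓ_b).choose ℓ_a`, and
this product is the quotient in the statement.

The scalar is a determinant. The subspaces are first enlarged, inside `M × (Fin k × ℕ →₀ F)`, so
that every dimension is exactly `ℓ_j` (`exists_padding`). The vector space is then mapped to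
coordinate spaces over a field of rational functions by a matrix of independent indeterminates
(`exists_generic_map`), which keeps linearly independent families of `ℓ_a + ℓ_b` vectors independent.
`D_{ab}(i, i')` is the determinant of the images of a basis of `U i a` followed by a basis of
`U i' b`. The rank bound is the Laplace expansion along the first `ℓ_a` rows, obtained here from the
dimension of the exterior power (`exists_laplace`).
-/

/-- Laplace expansion along the first `a` rows, in the weak form that suffices for rank bounds: the
determinant is a sum of `(a + b).choose a` products of a function of the first `a` rows and a
function of the last `b` rows. -/
lemma exists_laplace (K : Type*) [Field K] (a b : ℕ) :
    ∃ (f : (Fin a → (Fin a ⊕ Fin b → K)) → Fin ((a + b).choose a) → K)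
      (g : (Fin b → (Fin a ⊕ Fin b → K)) → Fin ((a + b).choose a) → K),
      ∀ α β, Matrix.det (Matrix.of (Sum.elim α β)) = ∑ t, f α t * g β t := by
  classical
  -- For fixed `β` the determinant is an alternating map of `α`.
  let L : (Fin b → (Fin a ⊕ Fin b → K)) → (Fin a ⊕ Fin b → K) [⋀^Fin a]→ₗ[K] K := fun β =>
    { toFun := fun α => Matrix.detRowAlternating (Sum.elim α β)
      map_update_add' := by
        intro _ α i x y
        have h : ∀ z, Sum.elim (Function.update α i z) β
            = Function.update (Sum.elim α β) (Sum.inl i) z := by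
          intro z
          rw [Sum.update_elim_inl]
        rw [h, h, h, AlternatingMap.map_update_add]
      map_update_smul' := by
        intro _ α i c x
        have h : ∀ z, Sum.elim (Function.update α i z) β
            = Function.update (Sum.elim α β) (Sum.inl i) z := by
          intro z
          rw [Sum.update_elim_inl]
        rw [h, h, AlternatingMap.map_update_smul]
      map_eq_zero_of_eq' := by
        intro α i j hij hne
        exact AlternatingMap.map_eq_zero_of_eq _ _ (i := Sum.inl i) (j := Sum.inl j) hij
          (fun h => hne (Sum.inl_injective h)) }
  have hrank : Module.finrank K (⋀[K]^a (Fin a ⊕ Fin b → K)) = (a + b).choose a := by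
    rw [exteriorPower.finrank_eq]
    simp
  let B := Module.finBasisOfFinrankEq K (⋀[K]^a (Fin a ⊕ Fin b → K)) hrank
  refine ⟨fun α t => B.repr (exteriorPower.ιMulti K a α) t,
    fun β t => exteriorPower.alternatingMapLinearEquiv (L β) (B t), fun α β => ?_⟩
  have h1 : Matrix.det (Matrix.of (Sum.elim α β)) = L β α := rfl
  rw [h1, ← exteriorPower.alternatingMapLinearEquiv_apply_ιMulti]
  conv_lhs => rw [← B.sum_repr (exteriorPower.ιMulti K a α)]
  simp only [map_sum, map_smul, smul_eq_mul]

/-- The inclusion of the column index type of an `(a + b) × (a + b)` matrix into a type that does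
not depend on `a` and `b`. -/
def colIdx (a b : ℕ) : Fin a ⊕ Fin b → ℕ ⊕ ℕ := Sum.map Fin.val Fin.val

lemma colIdx_injective (a b : ℕ) : Function.Injective (colIdx a b) :=
  Sum.map_injective.2 ⟨Fin.val_injective, Fin.val_injective⟩

/-- A generic linear map: the images of the basis vectors have independent indeterminates as
coordinates. The determinant of an independent family does not vanish, since specialising the
indeterminates to a left inverse of the family turns it into `1`. -/
lemma exists_generic_map.{u, v} (F : Type u) [Field F] (M : Type v) [AddCommGroup M]
    [Module F M] :
    ∃ (K : Type (max u v)) (_ : Field K) (_ : Algebra F K) (φ : M →ₗ[F] (ℕ ⊕ ℕ → K)),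
      ∀ (a b : ℕ) (w : Fin a ⊕ Fin b → M), LinearIndependent F w →
        Matrix.det (Matrix.of fun x y => φ (w x) (colIdx a b y)) ≠ 0 := by
  classical
  let B := Module.Basis.ofVectorSpace F M
  let R := MvPolynomial (Module.Basis.ofVectorSpaceIndex F M × (ℕ ⊕ ℕ)) F
  let K := FractionRing R
  let ψ : M →ₗ[F] (ℕ ⊕ ℕ → R) := B.constr F fun e n => MvPolynomial.X (e, n)
  let ι : R →ₐ[F] K := IsScalarTower.toAlgHom F R K
  refine ⟨K, inferInstance, inferInstance, ι.toLinearMap.compLeft (ℕ ⊕ ℕ) ∘ₗ ψ, ?_⟩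
  intro a b w hw hdet
  have hR : Matrix.det (Matrix.of fun x y => ψ (w x) (colIdx a b y)) = 0 := by
    apply IsFractionRing.injective R K
    rw [map_zero, RingHom.map_det]
    exact hdet
  obtain ⟨h, hh⟩ := LinearMap.exists_leftInverse_of_injective
    (Finsupp.linearCombination F w) (LinearMap.ker_eq_bot.2 hw)
  have hhw : ∀ x, h (w x) = Finsupp.single x 1 := by
    intro x
    have := LinearMap.congr_fun hh (Finsupp.single x 1)
    simpa using this
  let ev : R →ₐ[F] F := MvPolynomial.aeval fun en =>
    Function.extend (colIdx a b) (h (B en.1)) 0 en.2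
  have hev : ∀ (v : M) (y : Fin a ⊕ Fin b), ev (ψ v (colIdx a b y)) = h v y := by
    intro v y
    have : ev.toLinearMap ∘ₗ LinearMap.proj (colIdx a b y) ∘ₗ ψ
        = Finsupp.lapply y ∘ₗ h := by
      refine B.ext fun e => ?_
      have hX : ev (MvPolynomial.X (e, colIdx a b y)) = h (B e) y :=
        (MvPolynomial.aeval_X _ _).trans ((colIdx_injective a b).extend_apply _ _ _)
      simpa [ψ] using hX
    exact LinearMap.congr_fun this v
  have h0 := congrArg ev hR
  rw [map_zero, AlgHom.map_det] at h0
  have h1 : ev.mapMatrix (Matrix.of fun x y => ψ (w x) (colIdx a b y)) = 1 := by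
    ext x y
    simp [hev, hhw, Matrix.one_apply, Finsupp.single_apply]
  rw [h1, Matrix.det_one] at h0
  exact one_ne_zero h0

/-- The entrywise product of the matrices `∑ t, f p i t * g p i' t` factors through the product of
the index sets `Fin (c p)`, so its rank is at most `∏ p, c p`; being triangular with nonzero
diagonal, it has rank `m`. -/
lemma le_prod_of_triangular {K : Type*} [Field K] {P : Type*} [Fintype P] (m : ℕ) (c : P → ℕ)
    (f g : ∀ p : P, Fin m → Fin (c p) → K)
    (hdiag : ∀ i p, ∑ t, f p i t * g p i t ≠ 0)
    (htri : ∀ i i', i < i' → ∃ p, ∑ t, f p i t * g p i' t = 0) :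
    m ≤ ∏ p, c p := by
  classical
  let A : Matrix (Fin m) (∀ p, Fin (c p)) K := Matrix.of fun i t => ∏ p, f p i (t p)
  let C : Matrix (∀ p, Fin (c p)) (Fin m) K := Matrix.of fun t i => ∏ p, g p i (t p)
  have hAC : ∀ i i', (A * C) i i' = ∏ p, ∑ t, f p i t * g p i' t := by
    intro i i'
    rw [Finset.prod_univ_sum, Matrix.mul_apply, Fintype.piFinset_univ]
    exact Finset.sum_congr rfl fun t _ => Finset.prod_mul_distrib.symm
  have hlow : (A * C).IsLowerTriangular := by
    intro i i' hii'
    rw [hAC]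
    obtain ⟨p, hp⟩ := htri i i' hii'
    exact Finset.prod_eq_zero (Finset.mem_univ p) hp
  have hdet : (A * C).det ≠ 0 := by
    rw [Matrix.det_of_isLowerTriangular _ hlow]
    refine Finset.prod_ne_zero_iff.2 fun i _ => ?_
    rw [hAC]
    exact Finset.prod_ne_zero_iff.2 fun p _ => hdiag i p
  have hrank : (A * C).rank = m := by
    rw [Matrix.rank_of_isUnit _ ((Matrix.isUnit_iff_isUnit_det _).2 (isUnit_iff_ne_zero.2 hdet))]
    simp
  calc m = (A * C).rank := hrank.symm
    _ ≤ A.rank := Matrix.rank_mul_le_left _ _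
    _ ≤ Fintype.card (∀ p, Fin (c p)) := Matrix.rank_le_card_width _
    _ = ∏ p, c p := by simp

lemma exists_basis_family {F V : Type*} [Field F] [AddCommGroup V] [Module F V]
    (W : Submodule F V) [Module.Finite F W] {n : ℕ} (hn : Module.finrank F W = n) :
    ∃ w : Fin n → V, LinearIndependent F w ∧ Submodule.span F (Set.range w) = W := by
  let B := Module.finBasisOfFinrankEq F W hn
  refine ⟨fun x => B x, B.linearIndependent.map' W.subtype W.ker_subtype, ?_⟩
  have h := congrArg (Submodule.map W.subtype) B.span_eq
  rw [Submodule.map_span, ← Set.range_comp, Submodule.map_top, Submodule.range_subtype] at h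
  exact h

/-- Enlarging the subspaces by fresh coordinate vectors, which depend on the column only, makes all
dimensions exact and keeps both kinds of intersection conditions. -/
lemma exists_padding {F : Type*} [Field F] {M : Type*} [AddCommGroup M] [Module F M]
    (k m : ℕ) (ℓ : Fin k → ℕ)
    (U : Fin m → Fin k → Submodule F M)
    (hfd : ∀ i j, FiniteDimensional F (U i j))
    (hdim : ∀ i j, Module.finrank F (U i j) ≤ ℓ j)
    (hdisj : ∀ i, ∀ j j' : Fin k, j ≠ j' → U i j ⊓ U i j' = ⊥) :
    ∃ w : ∀ (_ : Fin m) (j : Fin k), Fin (ℓ j) → M × (Fin k × ℕ →₀ F),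
      (∀ i j j', j ≠ j' → LinearIndependent F (Sum.elim (w i j) (w i j'))) ∧
      (∀ i i' j j', U i j ⊓ U i' j' ≠ ⊥ →
        ¬ LinearIndependent F (Sum.elim (w i j) (w i' j'))) := by
  classical
  let S : Fin m → Fin k → Finset (Fin k × ℕ) := fun i j =>
    {j} ×ˢ Finset.range (ℓ j - Module.finrank F (U i j))
  let W : Fin m → Fin k → Submodule F (M × (Fin k × ℕ →₀ F)) := fun i j =>
    (U i j).prod (Finsupp.supported F F (S i j : Set (Fin k × ℕ)))
  let e : ∀ i j, W i j ≃ₗ[F] (U i j) × Finsupp.supported F F (S i j : Set (Fin k × ℕ)) :=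
    fun i j =>
    { toFun := fun x => (⟨x.1.1, x.2.1⟩, ⟨x.1.2, x.2.2⟩)
      invFun := fun x => ⟨(x.1.1, x.2.1), x.1.2, x.2.2⟩
      map_add' := fun _ _ => rfl
      map_smul' := fun _ _ => rfl
      left_inv := fun _ => rfl
      right_inv := fun _ => rfl }
  let e' : ∀ i j, W i j ≃ₗ[F] (U i j) × ((S i j : Set (Fin k × ℕ)) →₀ F) := fun i j =>
    (e i j).trans ((LinearEquiv.refl F _).prodCongr (Finsupp.supportedEquivFinsupp _))
  have hWfd : ∀ i j, Module.Finite F (W i j) := fun i j => Module.Finite.equiv (e' i j).symm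
  have hWrank : ∀ i j, Module.finrank F (W i j) = ℓ j := by
    intro i j
    rw [(e' i j).finrank_eq, Module.finrank_prod, Module.finrank_finsupp_self]
    have := hdim i j
    have hS : Fintype.card (S i j : Set (Fin k × ℕ)) = ℓ j - Module.finrank F (U i j) := by
      simp only [Finset.coe_sort_coe, Fintype.card_coe, S, Finset.card_product,
        Finset.card_singleton, Finset.card_range, one_mul]
    omega
  choose w hli hspan using fun i j => exists_basis_family (W i j) (hWrank i j)
  refine ⟨w, fun i j j' hjj' => ?_, fun i i' j j' hne hli' => hne ?_⟩
  · refine LinearIndependent.sum_type (hli i j) (hli i j') ?_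
    rw [hspan, hspan, disjoint_iff, Submodule.prod_inf_prod, hdisj i j j' hjj',
      (Finsupp.disjoint_supported_supported _).eq_bot, Submodule.prod_bot]
    rw [Set.disjoint_left]
    rintro ⟨r, n⟩ h h'
    simp only [S, Finset.coe_product, Set.mem_prod, Finset.coe_singleton,
      Set.mem_singleton_iff] at h h'
    exact hjj' (h.1.symm.trans h'.1)
  · have hd := (linearIndependent_sum.1 hli').2.2
    simp only [Sum.elim_comp_inl, Sum.elim_comp_inr] at hd
    rw [hspan, hspan, Submodule.disjoint_def] at hd
    rw [eq_bot_iff]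
    rintro v ⟨hv, hv'⟩
    have := hd (v, 0) ⟨hv, Submodule.zero_mem _⟩ ⟨hv', Submodule.zero_mem _⟩
    exact (Prod.ext_iff.1 this).1

/-- Theorem 4 (second remedy): a weaker bound under pairwise disjointness of rows. -/
theorem einstein_second_remedy {F : Type*} [Field F] {M : Type*} [AddCommGroup M] [Module F M]
    (k m : ℕ) (ℓ : Fin k → ℕ) (hℓ : ∀ r, 0 < ℓ r)
    (U : Fin m → Fin k → Submodule F M)
    (hfd : ∀ i j, FiniteDimensional F (U i j))
    (hdim : ∀ i j, Module.finrank F (U i j) ≤ ℓ j)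
    (hdisj : ∀ i, ∀ j j' : Fin k, j ≠ j' → U i j ⊓ U i j' = ⊥)
    (hcross : ∀ i i' : Fin m, i < i' → ∃ j j' : Fin k, j < j' ∧ U i j ⊓ U i' j' ≠ ⊥) :
    m ≤ (∏ p ∈ Finset.univ.filter (fun p : Fin k × Fin k => p.1 < p.2),
          (ℓ p.1 + ℓ p.2).factorial) /
        (∏ r, (ℓ r).factorial) ^ (k - 1) := by
  classical
  obtain ⟨w, hind, hdep⟩ := exists_padding k m ℓ U hfd hdim hdisj
  obtain ⟨K, _, _, φ, hφ⟩ := exists_generic_map F (M × (Fin k × ℕ →₀ F))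
  choose f g hfg using exists_laplace K
  let P := {p : Fin k × Fin k // p.1 < p.2}
  let φ' : ∀ a b : ℕ, (M × (Fin k × ℕ →₀ F)) →ₗ[F] (Fin a ⊕ Fin b → K) := fun a b =>
    LinearMap.funLeft F K (colIdx a b) ∘ₗ φ
  have hD : ∀ (p : P) i i',
      ∑ t, f (ℓ p.1.1) (ℓ p.1.2) (fun x => φ' _ _ (w i p.1.1 x)) t *
        g (ℓ p.1.1) (ℓ p.1.2) (fun x => φ' _ _ (w i' p.1.2 x)) t =
      Matrix.detRowAlternating
        (fun x => φ' _ _ (Sum.elim (w i p.1.1) (w i' p.1.2) x)) := by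
    intro p i i'
    rw [← hfg]
    change Matrix.det _ = Matrix.det _
    congr 1
    ext x y
    rcases x with x | x <;> rfl
  have hmain : m ≤ ∏ p : P, (ℓ p.1.1 + ℓ p.1.2).choose (ℓ p.1.1) := by
    refine le_prod_of_triangular (K := K) m _
      (fun p i => f (ℓ p.1.1) (ℓ p.1.2) (fun x => φ' _ _ (w i p.1.1 x)))
      (fun p i => g (ℓ p.1.1) (ℓ p.1.2) (fun x => φ' _ _ (w i p.1.2 x))) ?_ ?_
    · intro i p
      rw [hD]
      exact hφ _ _ _ (hind i _ _ p.2.ne)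
    · intro i i' hii'
      obtain ⟨j, j', hjj', hne⟩ := hcross i i' hii'
      refine ⟨⟨(j, j'), hjj'⟩, ?_⟩
      rw [hD]
      refine AlternatingMap.map_linearDependent _ _ fun hK => hdep i i' j j' hne ?_
      exact LinearIndependent.of_comp (φ' _ _)
        (hK.restrict_scalars (by
          simpa [Algebra.smul_def] using FaithfulSMul.algebraMap_injective F K))
  -- Each index `r` lies in exactly `k - 1` of the pairs `a < b`.
  have hpow : ∏ p ∈ Finset.univ.filter (fun p : Fin k × Fin k => p.1 < p.2),
      ((ℓ p.1).factorial * (ℓ p.2).factorial) = (∏ r, (ℓ r).factorial) ^ (k - 1) := by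
    have hsnd : ∏ p ∈ Finset.univ.filter (fun p : Fin k × Fin k => p.1 < p.2),
        (ℓ p.2).factorial = ∏ p ∈ Finset.univ.filter (fun p : Fin k × Fin k => p.2 < p.1),
        (ℓ p.1).factorial := by
      refine Finset.prod_equiv (Equiv.prodComm _ _) ?_ ?_ <;> simp
    rw [Finset.prod_mul_distrib, hsnd, ← Finset.prod_union]
    · have : Finset.univ.filter (fun p : Fin k × Fin k => p.1 < p.2) ∪
          Finset.univ.filter (fun p : Fin k × Fin k => p.2 < p.1) =
          Finset.univ.filter (fun p : Fin k × Fin k => p.1 ≠ p.2) := by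
        ext p
        simp [lt_or_lt_iff_ne]
      rw [this, Finset.prod_filter, Fintype.prod_prod_type, ← Finset.prod_pow]
      refine Finset.prod_congr rfl fun r _ => ?_
      rw [← Finset.prod_filter]
      dsimp only
      rw [Finset.prod_const]
      congr 1
      rw [Finset.filter_ne, Finset.card_erase_of_mem (Finset.mem_univ _)]
      simp
    · rw [Finset.disjoint_filter]
      intro p _ h h'
      exact lt_asymm h h'
  rw [Nat.le_div_iff_mul_le (pow_pos (Finset.prod_pos fun r _ => Nat.factorial_pos _) _)]
  rw [← hpow]
  have hprod : ∏ p ∈ Finset.univ.filter (fun p : Fin k × Fin k => p.1 < p.2),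
      (ℓ p.1 + ℓ p.2).choose (ℓ p.1) = ∏ p : P, (ℓ p.1.1 + ℓ p.1.2).choose (ℓ p.1.1) :=
    Finset.prod_subtype _ (by simp) _
  rw [← hprod] at hmain
  refine (Nat.mul_le_mul_right _ hmain).trans (le_of_eq ?_)
  rw [← Finset.prod_mul_distrib]
  refine Finset.prod_congr rfl fun p _ => ?_
  rw [← mul_assoc, Nat.choose_symm_add, Nat.add_choose_mul_factorial_mul_factorial]
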